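/- Fix integers m ≥ 2 and α ≥ 2 and set n := m + α − 1. Every star is a reachable state of the reverse subset automaton A_{m,α}^R: for every (α−1)-element subset T of [n] there exists a word w ∈ {a, b}* such that δ^R(𝒮(T₀), w) = 𝒮(T). -/

import Mathlib

/-!
One step of the reverse automaton along a letter `c` pulls a family back along the permutation
`letterPerm n c`, so it sends the star of `T · c` to the star of `T` (`step_starFam`). The
permutations `σ` for which a single word sends the star of `T · σ` to the star of `T`, for all `T`,
form a submonoid containing both letters. As the `n`-cycle and an adjacent transposition generate
the symmetric group, and submonoids of a finite group are subgroups, this submonoid is everything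
(`exists_word`). It remains to choose `σ` mapping the given `T` onto `T₀`.
-/

/-- The reverse subset automaton `A^R` of a DFA `A`: states are subsets of the
state set of `A`, `δ^R(S, c) = {q : q·c ∈ S}`, the initial state is the set of
final states of `A`, and a subset is accepting iff it contains the start of `A`. -/
def reverseDFA {α σ : Type} (A : DFA α σ) : DFA α (Set σ) where
  step S c := {q | A.step q c ∈ S}
  start := A.accept
  accept := {S | A.start ∈ S}

/-- The transposition `(1 2)` on `[n]`, encoded on `Fin n` as the swap of `0` and `1`
(we label `[n] = {1, …, n}` by `Fin n = {0, …, n-1}`). -/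
noncomputable def swap01 (n : ℕ) : Equiv.Perm (Fin n) :=
  if h : 2 ≤ n then Equiv.swap ⟨0, by omega⟩ ⟨1, by omega⟩ else 1

/-- The binary alphabet is `Bool`: the letter `a := false` acts as the `n`-cycle
`(1 2 … n)` and the letter `b := true` acts as the transposition `(1 2)`. -/
noncomputable def letterPerm (n : ℕ) : Bool → Equiv.Perm (Fin n)
  | false => finRotate n
  | true => swap01 n

/-- The subset `{1, …, k}` of `[n]`, encoded as `{i : Fin n | i.val < k}`. -/
def seg (n k : ℕ) : Finset (Fin n) := Finset.univ.filter (fun i => (i : ℕ) < k)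

/-- The star `𝒮(T)`: the family of all `a`-element subsets `X` of `[n]` with `T ⊆ X`. -/
def starFam (n a : ℕ) (T : Finset (Fin n)) : Set (Finset (Fin n)) :=
  {X | X.card = a ∧ T ⊆ X}

/-- The witness permutation automaton `A_{m,α}` (with `n = m + α - 1`): states are the
subsets of `[n]` (the relevant part being the `α`-element ones), each letter acts
elementwise via `letterPerm`, the initial state is `q_I = {1, …, α}` and the final
states are the star `𝒮(T₀)` with `T₀ = {1, …, α-1}`. -/
noncomputable def witnessDFA (n a : ℕ) : DFA Bool (Finset (Fin n)) where
  step X c := X.map (letterPerm n c).toEmbedding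
  start := seg n a
  accept := starFam n a (seg n (a - 1))

theorem step_starFam (n a : ℕ) (T : Finset (Fin n)) (c : Bool) :
    (reverseDFA (witnessDFA n a)).step
      (starFam n a (T.map (letterPerm n c).toEmbedding)) c = starFam n a T := by
  ext X
  simp [reverseDFA, witnessDFA, starFam]

theorem closure_letterPerm (n : ℕ) (hn : 2 ≤ n) :
    Submonoid.closure (Set.range (letterPerm n)) = ⊤ := by
  have hgroup : Subgroup.closure (Set.range (letterPerm n)) = ⊤ := by
    rw [← Equiv.Perm.closure_cycle_adjacent_swap (isCycle_finRotate_of_le hn)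
      (support_finRotate_of_le hn) ⟨0, by omega⟩]
    congr 1
    have hrot : finRotate n ⟨0, by omega⟩ = ⟨1, by omega⟩ := by
      obtain ⟨k, rfl⟩ := Nat.exists_eq_add_of_le' hn
      exact finRotate_of_lt (by omega)
    ext σ
    simp [letterPerm, swap01, hn, hrot]
  rw [← Subgroup.closure_toSubmonoid_of_finite, hgroup, Subgroup.top_toSubmonoid]

/-- Every permutation is realised by a word, uniformly in `T`; the uniformity is what lets words
be concatenated. -/
theorem exists_word (n a : ℕ) (hn : 2 ≤ n) (σ : Equiv.Perm (Fin n)) :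
    ∃ w : List Bool, ∀ T : Finset (Fin n),
      (reverseDFA (witnessDFA n a)).evalFrom (starFam n a (T.map σ.toEmbedding)) w =
        starFam n a T := by
  have hσ : σ ∈ Submonoid.closure (Set.range (letterPerm n)) := by
    rw [closure_letterPerm n hn]
    trivial
  induction hσ using Submonoid.closure_induction with
  | mem x hx =>
    obtain ⟨c, rfl⟩ := hx
    exact ⟨[c], fun T => by rw [DFA.evalFrom_singleton, step_starFam]⟩
  | one => exact ⟨[], fun T => by simp [Equiv.Perm.one_def]⟩
  | mul σ τ _ _ ihσ ihτ =>
    obtain ⟨u, hu⟩ := ihσ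
    obtain ⟨v, hv⟩ := ihτ
    refine ⟨u ++ v, fun T => ?_⟩
    have hmap : T.map (σ * τ).toEmbedding = (T.map τ.toEmbedding).map σ.toEmbedding := by
      rw [Finset.map_map]
      rfl
    rw [DFA.evalFrom_of_append, hmap, hu, hv]

/-- Every star is a reachable state of the reverse subset automaton
`A_{m,α}^R`: for every `(α-1)`-element subset `T` of `[n]` there exists a word
`w ∈ {a,b}*` with `δ^R(𝒮(T₀), w) = 𝒮(T)`. -/
theorem stmt11 (m a n : ℕ) (hm : 2 ≤ m) (ha : 2 ≤ a) (hn : n = m + a - 1)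
    (T : Finset (Fin n)) (hT : T.card = a - 1) :
    ∃ w : List Bool,
      (reverseDFA (witnessDFA n a)).evalFrom (starFam n a (seg n (a - 1))) w =
        starFam n a T := by
  have hcard : T.card = (seg n (a - 1)).card := by
    rw [hT, seg, Fin.card_filter_val_lt]
    omega
  obtain ⟨σ, hσ⟩ := Equiv.Perm.exists_map_finset_eq T (seg n (a - 1)) hcard
  obtain ⟨w, hw⟩ := exists_word n a (by omega) σ
  exact ⟨w, by rw [← hσ, hw]⟩
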